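/- arXiv:1902.10373 — 2 statements merged into one kernel-verified Lean document; each statement's English description precedes it below -/
import Mathlib

section
/- Let p/q ∈ ℚ ∩ (0,1) have reduced regular continued fraction expansion [a_1, a_2, …, a_n] (so a_i ≥ 1 for all i and a_n ≥ 2). Then the unique binary word w with k(w) = p/q in the Kepler tree is w = 0^{a_n−2} 1 0^{a_{n−1}−1} 1 ⋯ 1 0^{a_2−1} 1 0^{a_1−1}, and the length of w (the level of the Kepler tree at which p/q occurs) equals a_1 + a_2 + ⋯ + a_n − 2. Equivalently, in terms of continued fractions, moving to the left child replaces [a_1, a_2, …, a_n] by [a_1+1, a_2, …, a_n] and moving to the right child replaces it by [1, a_1, a_2, …, a_n]. -/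
/-- Value of a finite regular continued fraction
`[a₁, a₂, …, aₙ] = 1/(a₁ + 1/(a₂ + ⋯ + 1/aₙ))`. -/
def cfvQ : List ℕ → ℚ
  | [] => 0
  | a :: t => 1 / (a + cfvQ t)

/-- The Kepler tree rule: if a node carries the rational `r = p/q` (in lowest terms), then
its left child carries `r/(r+1) = p/(p+q)` and its right child carries `1/(r+1) = q/(p+q)`.
(`false` = left child, `true` = right child.) -/
def keplerStep (r : ℚ) (b : Bool) : ℚ := if b then 1 / (r + 1) else r / (r + 1)

/-- The rational at the node of the Kepler tree indexed by the binary word `w`: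
the root `1/2` is indexed by the empty word, and appending `false` (resp. `true`) moves to
the left (resp. right) child. -/
def keplerNode (w : List Bool) : ℚ := w.foldl keplerStep (1 / 2)

/-- The binary word `0^{aₙ-2} 1 0^{a_{n-1}-1} 1 ⋯ 1 0^{a₂-1} 1 0^{a₁-1}` associated to a
continued fraction expansion `[a₁, …, aₙ]` (`false` = `0`, `true` = `1`). -/
def keplerWord : List ℕ → List Bool
  | [] => []
  | [a] => List.replicate (a - 2) false
  | a :: t => keplerWord t ++ true :: List.replicate (a - 1) false

theorem keplerNode_append_singleton (w : List Bool) (b : Bool) :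
    keplerNode (w ++ [b]) = keplerStep (keplerNode w) b := by
  simp [keplerNode]

theorem keplerStep_pos {r : ℚ} (hr : 0 < r) (b : Bool) : 0 < keplerStep r b := by
  cases b <;> simp only [keplerStep] <;> positivity

theorem keplerNode_mem_Ioo (w : List Bool) : keplerNode w ∈ Set.Ioo 0 1 := by
  induction w using List.reverseRecOn with
  | nil => norm_num [keplerNode]
  | append_singleton w b ih =>
    rw [keplerNode_append_singleton]
    refine ⟨keplerStep_pos ih.1 b, ?_⟩
    have h0 := ih.1
    cases b <;> simp only [keplerStep, Bool.false_eq_true, if_true, if_false] <;>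
      rw [div_lt_one (by positivity)] <;> linarith

theorem keplerStep_false_lt_half {r : ℚ} (hr : r ∈ Set.Ioo 0 1) :
    keplerStep r false < 1 / 2 := by
  have h0 := hr.1
  have h1 := hr.2
  simp only [keplerStep, Bool.false_eq_true, if_false]
  rw [div_lt_div_iff₀ (by positivity) (by norm_num)]
  linarith

theorem half_lt_keplerStep_true {r : ℚ} (hr : r ∈ Set.Ioo 0 1) :
    1 / 2 < keplerStep r true := by
  have h0 := hr.1
  have h1 := hr.2
  simp only [keplerStep, if_true]
  rw [div_lt_div_iff₀ (by norm_num) (by positivity)]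
  linarith

theorem keplerStep_inj {r s : ℚ} (hr : r ∈ Set.Ioo 0 1) (hs : s ∈ Set.Ioo 0 1) {b c : Bool}
    (h : keplerStep r b = keplerStep s c) : r = s ∧ b = c := by
  have hr0 := hr.1
  have hs0 := hs.1
  have hrf := keplerStep_false_lt_half hr
  have hsf := keplerStep_false_lt_half hs
  have hrt := half_lt_keplerStep_true hr
  have hst := half_lt_keplerStep_true hs
  cases b <;> cases c
  · simp only [keplerStep, Bool.false_eq_true, if_false] at h
    rw [div_eq_div_iff (by positivity) (by positivity)] at h
    exact ⟨by linarith, rfl⟩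
  · linarith
  · linarith
  · simp only [keplerStep, if_true] at h
    rw [div_eq_div_iff (by positivity) (by positivity)] at h
    exact ⟨by linarith, rfl⟩

theorem keplerStep_ne_half {r : ℚ} (hr : r ∈ Set.Ioo 0 1) (b : Bool) :
    keplerStep r b ≠ 1 / 2 := by
  cases b
  · exact (keplerStep_false_lt_half hr).ne
  · exact (half_lt_keplerStep_true hr).ne'

theorem keplerNode_injective : Function.Injective keplerNode := by
  intro w
  induction w using List.reverseRecOn with
  | nil =>
    intro v h
    rcases List.eq_nil_or_concat v with rfl | ⟨v, c, rfl⟩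
    · rfl
    · rw [List.concat_eq_append, keplerNode_append_singleton] at h
      exact absurd h.symm (keplerStep_ne_half (keplerNode_mem_Ioo v) c)
  | append_singleton w b ih =>
    intro v h
    rw [keplerNode_append_singleton] at h
    rcases List.eq_nil_or_concat v with rfl | ⟨v, c, rfl⟩
    · exact absurd h (keplerStep_ne_half (keplerNode_mem_Ioo w) b)
    · rw [List.concat_eq_append, keplerNode_append_singleton] at h
      obtain ⟨hwv, rfl⟩ := keplerStep_inj (keplerNode_mem_Ioo w) (keplerNode_mem_Ioo v) h
      rw [ih hwv, List.concat_eq_append]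

theorem keplerNode_append_replicate_false (w : List Bool) (m : ℕ) :
    keplerNode (w ++ List.replicate m false) = keplerNode w / (m * keplerNode w + 1) := by
  have h0 := (keplerNode_mem_Ioo w).1
  induction m with
  | zero => simp
  | succ m ih =>
    rw [List.replicate_succ', ← List.append_assoc, keplerNode_append_singleton, ih]
    simp only [keplerStep, Bool.false_eq_true, if_false]
    push_cast
    field_simp
    ring

theorem keplerNode_keplerWord (a : List ℕ) (ha : a ≠ []) (h1 : ∀ x ∈ a, 1 ≤ x)
    (h2 : 2 ≤ a.getLastD 0) : keplerNode (keplerWord a) = cfvQ a := by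
  induction a with
  | nil => exact absurd rfl ha
  | cons a t ih =>
    cases t with
    | nil =>
      obtain ⟨m, rfl⟩ : ∃ m, a = m + 2 := ⟨a - 2, by simp at h2; omega⟩
      have h := keplerNode_append_replicate_false [] m
      rw [List.nil_append] at h
      rw [keplerWord, Nat.add_sub_cancel, h]
      simp only [keplerNode, List.foldl_nil, cfvQ]
      push_cast
      field_simp
      ring
    | cons b t =>
      obtain ⟨m, rfl⟩ : ∃ m, a = m + 1 := ⟨a - 1, by have := h1 a (by simp); omega⟩
      have ih := ih (by simp) (fun x hx => h1 x (List.mem_cons_of_mem _ hx)) (by simpa using h2)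
      have h0 := (keplerNode_mem_Ioo (keplerWord (b :: t))).1
      rw [keplerWord.eq_3 _ _ (by simp), Nat.add_sub_cancel, List.append_cons,
        keplerNode_append_replicate_false, keplerNode_append_singleton, cfvQ, ← ih]
      simp only [keplerStep, if_true]
      push_cast
      field_simp
      ring

theorem two_le_sum_of_getLastD {a : List ℕ} (h2 : 2 ≤ a.getLastD 0) : 2 ≤ a.sum := by
  rcases List.eq_nil_or_concat a with rfl | ⟨l, x, rfl⟩
  · simp at h2
  · simp at h2 ⊢
    omega

theorem length_keplerWord (a : List ℕ) (h1 : ∀ x ∈ a, 1 ≤ x) (h2 : 2 ≤ a.getLastD 0) :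
    (keplerWord a).length = a.sum - 2 := by
  induction a with
  | nil => rfl
  | cons a t ih =>
    cases t with
    | nil => simp [keplerWord]
    | cons b t =>
      have h2' : 2 ≤ (b :: t).getLastD 0 := by simpa using h2
      have ih := ih (fun x hx => h1 x (List.mem_cons_of_mem _ hx)) h2'
      have hs := two_le_sum_of_getLastD h2'
      have ha := h1 a (by simp)
      rw [keplerWord.eq_3 _ _ (by simp), List.length_append, ih, List.length_cons,
        List.length_replicate, List.sum_cons (a := a)]
      omega

/-- Let `p/q ∈ ℚ ∩ (0,1)` have reduced continued fraction expansion `a = [a₁, …, aₙ]`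
(all `aᵢ ≥ 1`, `aₙ ≥ 2`).  Then the unique binary word `w` with `keplerNode w = p/q` is
`w = 0^{aₙ-2} 1 0^{a_{n-1}-1} 1 ⋯ 1 0^{a₂-1} 1 0^{a₁-1}`, whose length — the level of the
Kepler tree at which `p/q` occurs — is `a₁ + ⋯ + aₙ - 2`.  Equivalently, moving to the left
child replaces `[a₁, a₂, …, aₙ]` by `[a₁+1, a₂, …, aₙ]` and moving to the right child
replaces it by `[1, a₁, a₂, …, aₙ]`. -/
theorem keplerWord_spec (a : List ℕ) (ha : a ≠ []) (h1 : ∀ x ∈ a, 1 ≤ x)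
    (h2 : 2 ≤ a.getLastD 0) :
    (∀ w : List Bool, keplerNode w = cfvQ a ↔ w = keplerWord a) ∧
    (keplerWord a).length = a.sum - 2 ∧
    keplerNode (keplerWord a ++ [false]) = cfvQ ((a.headI + 1) :: a.tail) ∧
    keplerNode (keplerWord a ++ [true]) = cfvQ (1 :: a) := by
  have h := keplerNode_keplerWord a ha h1 h2
  have h0 := (keplerNode_mem_Ioo (keplerWord a)).1
  refine ⟨fun w => ?_, length_keplerWord a h1 h2, ?_, ?_⟩
  · rw [← h, keplerNode_injective.eq_iff]
  · cases a with
    | nil => exact absurd rfl ha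
    | cons b t =>
      rw [h] at h0
      rw [keplerNode_append_singleton, h]
      simp only [keplerStep, Bool.false_eq_true, if_false, cfvQ, List.headI_cons,
        List.tail_cons] at h0 ⊢
      have hb : 0 < (b : ℚ) + cfvQ t := one_div_pos.mp h0
      have hb' : 0 < (b : ℚ) + 1 + cfvQ t := by linarith
      push_cast
      field_simp
      ring
  · rw [keplerNode_append_singleton, h]
    simp [keplerStep, cfvQ, add_comm]
end

section
/- Let (k_i)_{i≥1} enumerate ℚ ∩ (0,1) by reading the Kepler tree top-down, left-to-right (so k_1 = 1/2 and the children of k_n are k_{2n} and k_{2n+1}), and let 𝒦 = (a_j)_{j≥1} be the infinite sequence of positive integers obtained by concatenating the reduced continued fraction expansions of k_1, k_2, k_3, …. Then 𝒦 is Minkowski normal: for every k ≥ 1 and every block d = (d_1, …, d_k) of positive integers, the number of indices 1 ≤ i ≤ n − k + 1 with a_{i+j−1} = d_j for all 1 ≤ j ≤ k, divided by n, converges to 2^{−(d_1 + ⋯ + d_k)} as n → ∞. (The number 𝒦 = [2, 3, 1, 2, 4, 1, 3, 2, 2, 1, 1, 2, 5, …] ≈ 0.44031 with these partial quotients is thus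 Minkowski normal.) -/
/-- Fuelled continued fraction digit algorithm: for `r ∈ (0,1)` produce the digit `⌊1/r⌋`
and recurse on the fractional part of `1/r`. -/
def cfeAux : ℕ → ℚ → List ℕ
  | 0, _ => []
  | fuel + 1, r =>
    if 0 < r ∧ r < 1 then (⌊r⁻¹⌋).toNat :: cfeAux fuel (Int.fract r⁻¹) else []

/-- The reduced regular continued fraction expansion `[a₁, …, aₙ]` (all `aᵢ ≥ 1`, `aₙ ≥ 2`)
of a rational `r ∈ (0,1)`; the empty list for `r ∉ (0,1)`.  (Each step of the digit
algorithm strictly decreases the denominator, so `r.den` steps of fuel always suffice.) -/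
def cfe (r : ℚ) : List ℕ := cfeAux r.den r

/-- The top-down, left-to-right enumeration of the Kepler tree: `keplerSeq 1 = 1/2` is the
root, and the children of `keplerSeq n` are `keplerSeq (2n)` (left) and `keplerSeq (2n+1)`
(right).  (`keplerSeq i` is the `i`-th term `k_i`; `keplerSeq 0` is junk.) -/
def keplerSeq (n : ℕ) : ℚ :=
  if n ≤ 1 then 1 / 2
  else keplerStep (keplerSeq (n / 2)) (decide (n % 2 = 1))
  termination_by n
  decreasing_by exact Nat.div_lt_self (by omega) (by norm_num)

/-- The reduced continued fraction expansion of the `(i+1)`-st rational `k_{i+1}` of the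
Kepler tree (in top-down, left-to-right order). -/
def keplerCFE (i : ℕ) : List ℕ := cfe (keplerSeq (i + 1))

/-- The infinite sequence `𝒦 = [2, 3, 1, 2, 4, 1, 3, 2, 2, 1, 1, 2, 5, …]` of digits
obtained by concatenating the reduced continued fraction expansions of the rationals of the
Kepler tree read top-down, left-to-right; `keplerDigits n` is its `(n+1)`-st digit.
(Each expansion is nonempty, so the concatenation of the first `n + 1` expansions has more
than `n` digits.) -/
def keplerDigits (n : ℕ) : ℕ := ((List.range (n + 1)).flatMap keplerCFE).getD n 0

/-- `occCount a d n` = number of occurrences of the block `d` among the first `n` digits of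
the sequence `a`: the number of (0-indexed) positions `p` with `p + d.length ≤ n` such that
the digits of `a` starting at position `p` spell out `d`.  (Positions `p = i - 1` for
`1 ≤ i ≤ n - d.length + 1`.) -/
noncomputable def occCount (a : ℕ → ℕ) (d : List ℕ) (n : ℕ) : ℕ :=
  Set.ncard {p : ℕ | p + d.length ≤ n ∧ ∀ j < d.length, a (p + j) = d.getD j 0}

/-- A sequence of positive integer digits is *Minkowski normal* if every nonempty block
`d = (d₁, …, d_k)` of positive integers occurs with asymptotic frequency
`2^{-(d₁ + ⋯ + d_k)}`. -/
def MinkowskiNormalSeq (a : ℕ → ℕ) : Prop :=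
  ∀ d : List ℕ, d ≠ [] → (∀ x ∈ d, 0 < x) →
    Filter.Tendsto (fun n => (occCount a d n : ℝ) / n) Filter.atTop
      (nhds (((2 : ℝ) ^ d.sum)⁻¹))


/-! ### Continued fraction digits along the Kepler tree -/

theorem cfeAux_of_not_mem (fuel : ℕ) {r : ℚ} (hr : ¬(0 < r ∧ r < 1)) : cfeAux fuel r = [] := by
  cases fuel <;> simp [cfeAux, hr]

theorem cfeAux_eq_of_den_le {m n : ℕ} {r : ℚ} (hm : r.den ≤ m) (hn : r.den ≤ n) :
    cfeAux m r = cfeAux n r := by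
  induction m generalizing n r with
  | zero => exact absurd hm (by have := r.den_pos; omega)
  | succ m ih =>
    obtain _ | n := n
    · exact absurd hn (by have := r.den_pos; omega)
    by_cases hr : 0 < r ∧ r < 1
    · have hlt : (Int.fract r⁻¹).den < r.den := by
        rw [Rat.den_intFract, Rat.den_inv_of_ne_zero hr.1.ne']
        have h1 := Rat.num_pos.2 hr.1
        have h2 := Rat.num_lt_denom_iff.2 hr.2
        omega
      simp only [cfeAux, hr, and_self, if_true]
      rw [ih (by omega) (by omega : (Int.fract r⁻¹).den ≤ n)]
    · rw [cfeAux_of_not_mem _ hr, cfeAux_of_not_mem _ hr]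

theorem cfe_of_mem {r : ℚ} (h0 : 0 < r) (h1 : r < 1) :
    cfe r = ⌊r⁻¹⌋.toNat :: cfe (Int.fract r⁻¹) := by
  have hlt : (Int.fract r⁻¹).den < r.den := by
    rw [Rat.den_intFract, Rat.den_inv_of_ne_zero h0.ne']
    have := Rat.num_pos.2 h0
    have := Rat.num_lt_denom_iff.2 h1
    omega
  rw [cfe, cfeAux_eq_of_den_le le_rfl (Nat.le_succ _), cfeAux, if_pos ⟨h0, h1⟩,
    cfeAux_eq_of_den_le hlt.le le_rfl, cfe]

theorem cfe_one_half : cfe (1 / 2) = [2] := by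
  rw [cfe_of_mem (by norm_num) (by norm_num)]
  have h : Int.fract ((1 / 2 : ℚ)⁻¹) = 0 := by norm_num
  have h' : ⌊((1 / 2 : ℚ)⁻¹)⌋ = 2 := by norm_num
  rw [h, h', cfe, cfeAux_of_not_mem _ (by simp)]
  rfl

theorem cfe_keplerStep_true {r : ℚ} (h0 : 0 < r) (h1 : r < 1) :
    cfe (keplerStep r true) = 1 :: cfe r := by
  have h : (1 / (r + 1))⁻¹ = r + 1 := by rw [one_div, inv_inv]
  have hf : ⌊r⌋ = 0 := Int.floor_eq_zero_iff.2 ⟨h0.le, h1⟩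
  rw [keplerStep, if_pos rfl,
    cfe_of_mem (by positivity) (by rw [div_lt_one (by positivity)]; linarith), h,
    Int.fract_add_one, Int.fract_eq_self.2 ⟨h0.le, h1⟩, Int.floor_add_one, hf]
  rfl

theorem cfe_keplerStep_false {r : ℚ} (h0 : 0 < r) (h1 : r < 1) :
    cfe (keplerStep r false) = ((cfe r).headD 0 + 1) :: (cfe r).tail := by
  have h : (r / (r + 1))⁻¹ = r⁻¹ + 1 := by field_simp; ring
  have hf : 0 ≤ ⌊r⁻¹⌋ := Int.floor_nonneg.2 (by positivity)
  rw [keplerStep, if_neg (by simp),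
    cfe_of_mem (by positivity) (by rw [div_lt_one (by positivity)]; linarith), h,
    Int.fract_add_one, Int.floor_add_one, cfe_of_mem h0 h1, Int.toNat_add hf (by norm_num)]
  rfl

theorem keplerSeq_of_le_one {n : ℕ} (hn : n ≤ 1) : keplerSeq n = 1 / 2 := by
  rw [keplerSeq, if_pos hn]

theorem keplerSeq_two_mul {n : ℕ} (hn : 1 ≤ n) :
    keplerSeq (2 * n) = keplerStep (keplerSeq n) false := by
  rw [keplerSeq, if_neg (by omega)]
  congr 2
  · omega
  · simp

theorem keplerSeq_two_mul_add_one {n : ℕ} (hn : 1 ≤ n) :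
    keplerSeq (2 * n + 1) = keplerStep (keplerSeq n) true := by
  rw [keplerSeq, if_neg (by omega)]
  congr 2
  · omega
  · simp

theorem keplerSeq_mem (n : ℕ) : 0 < keplerSeq n ∧ keplerSeq n < 1 := by
  induction n using Nat.strong_induction_on with
  | _ n ih =>
    rw [keplerSeq]
    split_ifs with h
    · norm_num
    · obtain ⟨h0, h1⟩ := ih (n / 2) (by omega)
      cases decide (n % 2 = 1)
      · simp only [keplerStep, Bool.false_eq_true, if_false]
        exact ⟨by positivity, by rw [div_lt_one (by positivity)]; linarith⟩
      · simp only [keplerStep, if_true]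
        exact ⟨by positivity, by rw [div_lt_one (by positivity)]; linarith⟩

/-- The reduced continued fraction expansion of `keplerSeq n`. -/
def keplerExp (n : ℕ) : List ℕ := cfe (keplerSeq n)

theorem keplerExp_of_le_one {n : ℕ} (hn : n ≤ 1) : keplerExp n = [2] := by
  rw [keplerExp, keplerSeq_of_le_one hn, cfe_one_half]

theorem keplerExp_two_mul_add_one {n : ℕ} (hn : 1 ≤ n) :
    keplerExp (2 * n + 1) = 1 :: keplerExp n := by
  rw [keplerExp, keplerSeq_two_mul_add_one hn,
    cfe_keplerStep_true (keplerSeq_mem n).1 (keplerSeq_mem n).2, keplerExp]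

theorem keplerExp_two_mul {n : ℕ} (hn : 1 ≤ n) :
    keplerExp (2 * n) = ((keplerExp n).headD 0 + 1) :: (keplerExp n).tail := by
  rw [keplerExp, keplerSeq_two_mul hn,
    cfe_keplerStep_false (keplerSeq_mem n).1 (keplerSeq_mem n).2, keplerExp]

theorem exists_keplerExp_eq_cons (n : ℕ) : ∃ a t, keplerExp n = a :: t ∧ 1 ≤ a := by
  refine ⟨_, _, cfe_of_mem (keplerSeq_mem n).1 (keplerSeq_mem n).2, ?_⟩
  have h : (1 : ℤ) ≤ ⌊(keplerSeq n)⁻¹⌋ := by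
    rw [Int.le_floor, Int.cast_one]
    exact (one_lt_inv₀ (keplerSeq_mem n).1).2 (keplerSeq_mem n).2 |>.le
  omega

theorem length_keplerExp_two_mul {n : ℕ} (hn : 1 ≤ n) :
    (keplerExp (2 * n)).length = (keplerExp n).length := by
  obtain ⟨a, t, h, -⟩ := exists_keplerExp_eq_cons n
  simp [keplerExp_two_mul hn, h]

theorem length_keplerExp_two_mul_add_one {n : ℕ} (hn : 1 ≤ n) :
    (keplerExp (2 * n + 1)).length = (keplerExp n).length + 1 := by
  simp [keplerExp_two_mul_add_one hn]

theorem length_keplerExp_le (n : ℕ) : (keplerExp n).length ≤ Nat.log 2 n + 1 := by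
  induction n using Nat.strong_induction_on with
  | _ n ih =>
    rcases Nat.lt_or_ge n 2 with h | h
    · simp [keplerExp_of_le_one (by omega : n ≤ 1)]
    · rw [Nat.log_of_one_lt_of_le one_lt_two h]
      have hm := ih (n / 2) (by omega)
      rcases Nat.mod_two_eq_zero_or_one n with h2 | h2
      · have := length_keplerExp_two_mul (by omega : 1 ≤ n / 2)
        rw [show 2 * (n / 2) = n by omega] at this
        omega
      · have := length_keplerExp_two_mul_add_one (by omega : 1 ≤ n / 2)
        rw [show 2 * (n / 2) + 1 = n by omega] at this
        omega

/-! ### Counting a block in a list -/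

/-- The number of occurrences of the nonempty block `d` in a list. -/
def blockCount (d : List ℕ) : List ℕ → ℕ
  | [] => 0
  | a :: t => (if d <+: a :: t then 1 else 0) + blockCount d t

theorem blockCount_le_length (d l : List ℕ) : blockCount d l ≤ l.length := by
  induction l with
  | nil => simp [blockCount]
  | cons a t ih =>
    simp only [blockCount, List.length_cons]
    split_ifs <;> omega

theorem blockCount_eq_card (d l : List ℕ) :
    blockCount d l = ((Finset.range l.length).filter (fun p => d <+: l.drop p)).card := by
  induction l with
  | nil => simp [blockCount]
  | cons a t ih =>
    rw [blockCount, ih, Finset.card_filter, Finset.card_filter, List.length_cons,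
      Finset.sum_range_succ', add_comm]
    simp

theorem blockCount_append_le (d l₁ l₂ : List ℕ) :
    blockCount d (l₁ ++ l₂) ≤ blockCount d l₁ + blockCount d l₂ + min l₁.length d.length := by
  induction l₁ with
  | nil => simp [blockCount]
  | cons a t ih =>
    simp only [blockCount, List.cons_append, List.length_cons]
    by_cases h : d <+: a :: t
    · have h' : d <+: a :: (t ++ l₂) := h.trans (List.prefix_append (a :: t) l₂)
      simp only [h, h', if_true]
      omega
    · by_cases h' : d <+: a :: (t ++ l₂)
      · have : t.length + 1 < d.length := by
          by_contra! hlen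
          exact h (List.prefix_of_prefix_length_le h' (List.prefix_append (a :: t) l₂) hlen)
        simp only [h, h', if_true, if_false]
        omega
      · simp only [h, h', if_false]
        omega

theorem le_blockCount_append (d l₁ l₂ : List ℕ) :
    blockCount d l₁ + blockCount d l₂ ≤ blockCount d (l₁ ++ l₂) := by
  induction l₁ with
  | nil => simp [blockCount]
  | cons a t ih =>
    simp only [blockCount, List.cons_append]
    by_cases h : d <+: a :: t
    · have h' : d <+: a :: (t ++ l₂) := h.trans (List.prefix_append (a :: t) l₂)
      simp only [h, h', if_true]
      omega
    · simp only [h, if_false]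
      split_ifs <;> omega

theorem occCount_eq_blockCount (a : ℕ → ℕ) {d : List ℕ} (hd : d ≠ []) (n : ℕ) :
    occCount a d n = blockCount d ((List.range n).map a) := by
  rw [occCount, blockCount_eq_card, ← Set.ncard_coe_finset]
  congr 1
  ext p
  have hpos := List.length_pos_iff.2 hd
  simp only [Set.mem_ofPred_eq, Finset.coe_filter, Finset.mem_range, List.length_map,
    List.length_range, List.prefix_iff_getElem, List.getElem_drop, List.getElem_map,
    List.getElem_range, List.length_drop]
  constructor
  · rintro ⟨h, h'⟩
    refine ⟨by omega, by omega, fun j hj => ?_⟩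
    rw [h' j hj, List.getD_eq_getElem _ _ hj]
  · rintro ⟨h, h', h''⟩
    refine ⟨by omega, fun j hj => ?_⟩
    rw [List.getD_eq_getElem _ _ hj, h'' j hj]

/-- The excess of the number of occurrences of `d` in `l` over `c * l.length`. -/
noncomputable def blockExcess (d : List ℕ) (c : ℝ) (l : List ℕ) : ℝ :=
  blockCount d l - c * l.length

theorem abs_blockExcess_le {c : ℝ} (hc0 : 0 ≤ c) (hc1 : c ≤ 1) (d l : List ℕ) :
    |blockExcess d c l| ≤ l.length := by
  have h : (blockCount d l : ℝ) ≤ l.length := by exact_mod_cast blockCount_le_length d l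
  have h' : (0 : ℝ) ≤ l.length := by positivity
  rw [blockExcess, abs_le]
  constructor <;> nlinarith [(blockCount d l).cast_nonneg (α := ℝ)]

theorem abs_blockExcess_append_sub_le (d : List ℕ) (c : ℝ) (l₁ l₂ : List ℕ) :
    |blockExcess d c (l₁ ++ l₂) - blockExcess d c l₁ - blockExcess d c l₂| ≤ d.length := by
  have h1 : (blockCount d (l₁ ++ l₂) : ℝ) ≤ blockCount d l₁ + blockCount d l₂ + d.length := by
    exact_mod_cast (blockCount_append_le d l₁ l₂).trans (by gcongr; exact min_le_right _ _)
  have h2 : (blockCount d l₁ + blockCount d l₂ : ℝ) ≤ blockCount d (l₁ ++ l₂) := by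
    exact_mod_cast le_blockCount_append d l₁ l₂
  simp only [blockExcess, List.length_append, Nat.cast_add, abs_le]
  constructor <;> linarith

/-! ### Equidistribution of the leading digits -/

theorem sum_range_two_mul (g : ℕ → ℝ) (M : ℕ) :
    ∑ n ∈ Finset.range (2 * M), g n = ∑ m ∈ Finset.range M, (g (2 * m) + g (2 * m + 1)) := by
  induction M with
  | zero => simp
  | succ M ih =>
    rw [show 2 * (M + 1) = 2 * M + 1 + 1 by ring, Finset.sum_range_succ, Finset.sum_range_succ,
      Finset.sum_range_succ, ih]
    ring

/-- Two sums whose terms agree at positive indices differ by at most the difference of the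
terms at `0`. -/
theorem abs_sum_range_sub_sum_range_le {g h : ℕ → ℝ} {B : ℝ} (h0 : |g 0 - h 0| ≤ B)
    (hgh : ∀ n, 1 ≤ n → g n = h n) (N : ℕ) :
    |∑ n ∈ Finset.range N, g n - ∑ n ∈ Finset.range N, h n| ≤ B := by
  rw [← Finset.sum_sub_distrib]
  obtain _ | N := N
  · simpa using (abs_nonneg _).trans h0
  · rw [Finset.sum_range_succ', Finset.sum_eq_zero, zero_add]
    · exact h0
    · intro n _
      rw [hgh _ (Nat.succ_pos n), sub_self]

theorem abs_sum_range_sub_half_mul_le {g h : ℕ → ℝ} {c B : ℝ} (hc0 : 0 ≤ c) (hc1 : c ≤ 1)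
    (hg : ∀ n, 0 ≤ g n ∧ g n ≤ 1) (hh : ∀ n, 0 ≤ h n ∧ h n ≤ 1)
    (hgh : ∀ n, 1 ≤ n → h (2 * n) + h (2 * n + 1) = g n)
    (hB : ∀ N : ℕ, |∑ n ∈ Finset.range N, g n - c * N| ≤ B) (N : ℕ) :
    |∑ n ∈ Finset.range N, h n - c / 2 * N| ≤ B + 4 := by
  have key : ∀ M : ℕ, |∑ n ∈ Finset.range (2 * M), h n - ∑ n ∈ Finset.range M, g n| ≤ 2 := by
    intro M
    rw [sum_range_two_mul]
    refine abs_sum_range_sub_sum_range_le ?_ hgh M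
    rw [abs_le]
    constructor <;> linarith [hg 0, hh (2 * 0), hh (2 * 0 + 1)]
  obtain ⟨M, rfl | rfl⟩ := Nat.even_or_odd' N
  · have h1 := abs_le.1 (key M)
    have h2 := abs_le.1 (hB M)
    push_cast
    rw [abs_le]
    constructor <;> linarith
  · have h1 := abs_le.1 (key M)
    have h2 := abs_le.1 (hB M)
    rw [Finset.sum_range_succ]
    push_cast
    rw [abs_le]
    constructor <;> linarith [hh (2 * M)]

/-- The indicator of the event that the expansion of `keplerSeq n` starts with `d`. -/
noncomputable def prefixInd (d : List ℕ) (n : ℕ) : ℝ := if d <+: keplerExp n then 1 else 0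

theorem prefixInd_mem (d : List ℕ) (n : ℕ) : 0 ≤ prefixInd d n ∧ prefixInd d n ≤ 1 := by
  rw [prefixInd]
  split_ifs <;> norm_num

theorem prefixInd_one_cons (d : List ℕ) {n : ℕ} (hn : 1 ≤ n) :
    prefixInd (1 :: d) (2 * n) + prefixInd (1 :: d) (2 * n + 1) = prefixInd d n := by
  obtain ⟨a, t, h, ha⟩ := exists_keplerExp_eq_cons n
  have : a ≠ 0 := by omega
  simp [prefixInd, keplerExp_two_mul hn, keplerExp_two_mul_add_one hn, h, List.cons_prefix_cons,
    this]

theorem prefixInd_succ_cons (d : List ℕ) {a n : ℕ} (ha : 1 ≤ a) (hn : 1 ≤ n) :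
    prefixInd ((a + 1) :: d) (2 * n) + prefixInd ((a + 1) :: d) (2 * n + 1)
      = prefixInd (a :: d) n := by
  obtain ⟨b, t, h, -⟩ := exists_keplerExp_eq_cons n
  have : a ≠ 0 := by omega
  simp [prefixInd, keplerExp_two_mul hn, keplerExp_two_mul_add_one hn, h, List.cons_prefix_cons,
    this]

theorem inv_two_pow_le_one (s : ℕ) : ((2 : ℝ) ^ s)⁻¹ ≤ 1 :=
  inv_le_one_of_one_le₀ (one_le_pow₀ one_le_two)

theorem exists_abs_sum_prefixInd_sub_le (d : List ℕ) (hd : ∀ x ∈ d, 0 < x) :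
    ∃ B : ℝ, ∀ N : ℕ,
      |∑ n ∈ Finset.range N, prefixInd d n - ((2 : ℝ) ^ d.sum)⁻¹ * N| ≤ B := by
  induction d with
  | nil => exact ⟨0, fun N => by simp [prefixInd]⟩
  | cons a d ih =>
    obtain ⟨B, hB⟩ := ih fun x hx => hd x (List.mem_cons_of_mem _ hx)
    have ha : 1 ≤ a := hd a List.mem_cons_self
    clear hd ih
    induction a, ha using Nat.le_induction with
    | base =>
      refine ⟨B + 4, fun N => ?_⟩
      have := abs_sum_range_sub_half_mul_le (by positivity) (inv_two_pow_le_one d.sum)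
        (prefixInd_mem d) (prefixInd_mem (1 :: d)) (fun n => prefixInd_one_cons d) hB N
      rwa [List.sum_cons, pow_add, pow_one, mul_inv, mul_comm (2 : ℝ)⁻¹, ← div_eq_mul_inv]
    | succ a ha ih =>
      obtain ⟨B, hB⟩ := ih
      refine ⟨B + 4, fun N => ?_⟩
      have := abs_sum_range_sub_half_mul_le (by positivity) (inv_two_pow_le_one (a :: d).sum)
        (prefixInd_mem (a :: d)) (prefixInd_mem ((a + 1) :: d))
        (fun n => prefixInd_succ_cons d ha) hB N
      rw [List.sum_cons] at this
      rwa [List.sum_cons, add_right_comm, pow_succ, mul_inv, ← div_eq_mul_inv]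

/-! ### The total excess over the first rationals of the tree -/

/-- The excess of the expansion of `keplerSeq n`, not counting an occurrence of the block at
the very beginning. -/
noncomputable def tailExcess (d : List ℕ) (c : ℝ) (n : ℕ) : ℝ :=
  blockCount d (keplerExp n).tail - c * (keplerExp n).length

theorem blockExcess_keplerExp (d : List ℕ) (c : ℝ) (n : ℕ) :
    blockExcess d c (keplerExp n) = tailExcess d c n + prefixInd d n := by
  obtain ⟨a, t, h, -⟩ := exists_keplerExp_eq_cons n
  rw [blockExcess, tailExcess, prefixInd, h, blockCount]
  push_cast
  simp only [List.tail_cons]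
  ring

theorem tailExcess_add_tailExcess (d : List ℕ) (c : ℝ) {n : ℕ} (hn : 1 ≤ n) :
    tailExcess d c (2 * n) + tailExcess d c (2 * n + 1)
      = 2 * tailExcess d c n + (prefixInd d n - c) := by
  obtain ⟨a, t, h, -⟩ := exists_keplerExp_eq_cons n
  simp only [tailExcess, prefixInd, keplerExp_two_mul hn, keplerExp_two_mul_add_one hn, h,
    blockCount, List.tail_cons, List.length_cons]
  push_cast
  ring

theorem abs_tailExcess_le {c : ℝ} (hc0 : 0 ≤ c) (hc1 : c ≤ 1) (d : List ℕ) (n : ℕ) :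
    |tailExcess d c n| ≤ Nat.log 2 n + 1 := by
  have hlen : ((keplerExp n).length : ℝ) ≤ Nat.log 2 n + 1 := by
    exact_mod_cast length_keplerExp_le n
  have h : (blockCount d (keplerExp n).tail : ℝ) ≤ (keplerExp n).length := by
    exact_mod_cast (blockCount_le_length d _).trans (by simp)
  have h' : (0 : ℝ) ≤ (keplerExp n).length := by positivity
  rw [tailExcess, abs_le]
  constructor <;> nlinarith [(blockCount d (keplerExp n).tail).cast_nonneg (α := ℝ)]

theorem exists_abs_sum_tailExcess_le (d : List ℕ) (hd : ∀ x ∈ d, 0 < x) :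
    ∃ K : ℝ, ∀ N : ℕ,
      |∑ n ∈ Finset.range N, tailExcess d ((2 : ℝ) ^ d.sum)⁻¹ n| ≤ K * N := by
  obtain ⟨B, hB⟩ := exists_abs_sum_prefixInd_sub_le d hd
  set c : ℝ := ((2 : ℝ) ^ d.sum)⁻¹ with hc
  have hc0 : 0 ≤ c := by positivity
  have hc1 : c ≤ 1 := inv_two_pow_le_one _
  have hB0 : 0 ≤ B := (abs_nonneg _).trans (hB 0)
  set T : ℕ → ℝ := fun N => ∑ n ∈ Finset.range N, tailExcess d c n with hT
  have heven : ∀ M : ℕ, |T (2 * M) - 2 * T M| ≤ B + 6 := by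
    intro M
    have h1 : |T (2 * M) - ∑ m ∈ Finset.range M, (2 * tailExcess d c m + (prefixInd d m - c))|
        ≤ 6 := by
      simp only [hT, sum_range_two_mul]
      refine abs_sum_range_sub_sum_range_le ?_ (fun n => tailExcess_add_tailExcess d c) M
      have e0 := abs_le.1 (abs_tailExcess_le hc0 hc1 d 0)
      have e1 := abs_le.1 (abs_tailExcess_le hc0 hc1 d 1)
      simp only [Nat.log_zero_right, Nat.log_one_right, Nat.cast_zero, zero_add] at e0 e1
      simp only [mul_zero, zero_add]
      rw [abs_le]
      constructor <;> linarith [prefixInd_mem d 0]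
    have h2 : ∑ m ∈ Finset.range M, (2 * tailExcess d c m + (prefixInd d m - c))
        = 2 * T M + (∑ m ∈ Finset.range M, prefixInd d m - c * M) := by
      rw [Finset.sum_add_distrib, ← Finset.mul_sum, Finset.sum_sub_distrib]
      simp [mul_comm, hT]
    rw [h2] at h1
    have h1 := abs_le.1 h1
    have h3 := abs_le.1 (hB M)
    rw [abs_le]
    constructor <;> linarith
  have main : ∀ N : ℕ, 1 ≤ N → |T N| ≤ (B + 9 + 1) * N - Nat.log 2 N - (B + 9) := by
    intro N
    induction N using Nat.strong_induction_on with
    | _ N ih =>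
      intro hN
      rcases hN.eq_or_lt with rfl | hN
      · have := abs_tailExcess_le hc0 hc1 d 0
        simpa [hT] using this
      · have hlog : (Nat.log 2 N : ℝ) = Nat.log 2 (N / 2) + 1 := by
          exact_mod_cast Nat.log_of_one_lt_of_le one_lt_two hN
        have h1 := ih (N / 2) (by omega) (by omega)
        have h2 := heven (N / 2)
        set M := N / 2 with hM
        rw [hlog]
        have h1 := abs_le.1 h1
        have h2 := abs_le.1 h2
        have hl : (0 : ℝ) ≤ Nat.log 2 M := by positivity
        rcases Nat.mod_two_eq_zero_or_one N with hmod | hmod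
        · have hNM : N = 2 * M := by omega
          have hNM' : (N : ℝ) = 2 * M := by exact_mod_cast hNM
          rw [hNM', hNM, abs_le]
          constructor <;> linarith
        · have hNM : N = 2 * M + 1 := by omega
          have hNM' : (N : ℝ) = 2 * M + 1 := by exact_mod_cast hNM
          have hlogM : Nat.log 2 (2 * M) = Nat.log 2 M + 1 := by
            rw [mul_comm, Nat.log_mul_base one_lt_two (by omega)]
          have h3 := abs_tailExcess_le hc0 hc1 d (2 * M)
          rw [hlogM] at h3
          push_cast at h3
          have h3 := abs_le.1 h3
          have h4 : T (2 * M + 1) = T (2 * M) + tailExcess d c (2 * M) :=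
            Finset.sum_range_succ _ _
          rw [hNM', hNM, h4, abs_le]
          constructor <;> linarith
  refine ⟨B + 10, fun N => ?_⟩
  rcases Nat.eq_zero_or_pos N with rfl | hN
  · simp
  · have := main N hN
    have hl : (0 : ℝ) ≤ Nat.log 2 N := by positivity
    exact this.trans (by linarith)

/-! ### The total number of digits grows superlinearly -/

theorem exists_mul_sub_le_sum_length (R : ℕ) : ∃ K : ℝ, ∀ N : ℕ,
    (R : ℝ) / 2 * N - K ≤ ∑ n ∈ Finset.range N, ((keplerExp n).length : ℝ) := by
  induction R with
  | zero => exact ⟨0, fun N => by simpa using Finset.sum_nonneg fun _ _ => Nat.cast_nonneg _⟩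
  | succ R ih =>
    obtain ⟨K, hK⟩ := ih
    refine ⟨2 * K + 2 + (R + 1), fun N => ?_⟩
    set W : ℕ → ℝ := fun N => ∑ n ∈ Finset.range N, ((keplerExp n).length : ℝ) with hW
    have h1 := hK (N / 2)
    set M := N / 2 with hM
    have heven : 2 * W M + M - 1 ≤ W (2 * M) := by
      have h : |W (2 * M) - ∑ m ∈ Finset.range M, (2 * ((keplerExp m).length : ℝ) + 1)| ≤ 1 := by
        simp only [hW, sum_range_two_mul]
        refine abs_sum_range_sub_sum_range_le ?_ (fun n hn => ?_) M
        · norm_num [keplerExp_of_le_one]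
        · rw [length_keplerExp_two_mul hn, length_keplerExp_two_mul_add_one hn]
          push_cast
          ring
      rw [Finset.sum_add_distrib, ← Finset.mul_sum] at h
      simp only [Finset.sum_const, Finset.card_range, nsmul_eq_mul, mul_one] at h
      linarith [(abs_le.1 h).1]
    have hmono : W (2 * M) ≤ W N :=
      Finset.sum_le_sum_of_subset_of_nonneg (Finset.range_mono (by omega))
        fun _ _ _ => Nat.cast_nonneg _
    have hNM : (N : ℝ) ≤ 2 * M + 1 := by exact_mod_cast (by omega : N ≤ 2 * M + 1)
    have hR : (0 : ℝ) ≤ R := by positivity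
    change _ ≤ W N
    change _ ≤ W M at h1
    push_cast
    nlinarith

/-! ### The concatenated sequence -/

/-- The concatenation of the expansions of the first `N` rationals of the Kepler tree. -/
def keplerConcat (N : ℕ) : List ℕ := (List.range N).flatMap keplerCFE

theorem keplerConcat_succ (N : ℕ) : keplerConcat (N + 1) = keplerConcat N ++ keplerExp (N + 1) := by
  simp [keplerConcat, List.range_succ, keplerCFE, keplerExp]

theorem keplerConcat_prefix {M N : ℕ} (h : M ≤ N) : keplerConcat M <+: keplerConcat N := by
  induction N, h using Nat.le_induction with
  | base => exact List.prefix_rfl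
  | succ N _ ih => exact ih.trans (keplerConcat_succ N ▸ List.prefix_append _ _)

theorem le_length_keplerConcat (N : ℕ) : N ≤ (keplerConcat N).length := by
  induction N with
  | zero => simp
  | succ N ih =>
    obtain ⟨a, t, h, -⟩ := exists_keplerExp_eq_cons (N + 1)
    simp only [keplerConcat_succ, h, List.length_append, List.length_cons]
    omega

theorem length_keplerConcat (N : ℕ) : ((keplerConcat N).length : ℝ)
    = ∑ n ∈ Finset.range (N + 1), ((keplerExp n).length : ℝ) - 1 := by
  induction N with
  | zero => simp [keplerConcat, keplerExp_of_le_one]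
  | succ N ih =>
    rw [keplerConcat_succ, List.length_append, Nat.cast_add, ih, Finset.sum_range_succ _ (N + 1)]
    ring

theorem keplerDigits_eq_getElem {N p : ℕ} (hp : p < (keplerConcat N).length) :
    keplerDigits p = (keplerConcat N)[p] := by
  have hp' : p < (keplerConcat (p + 1)).length := le_length_keplerConcat (p + 1)
  change (keplerConcat (p + 1)).getD p 0 = _
  rw [List.getD_eq_getElem _ _ hp']
  rcases le_total (p + 1) N with h | h
  · exact (keplerConcat_prefix h).getElem hp'
  · exact ((keplerConcat_prefix h).getElem hp).symm

theorem map_range_keplerDigits {n N : ℕ} (h : n ≤ (keplerConcat N).length) :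
    (List.range n).map keplerDigits = (keplerConcat N).take n := by
  apply List.ext_getElem
  · simp [h]
  · intro p h1 h2
    simp only [List.length_map, List.length_range] at h1
    simp [keplerDigits_eq_getElem (h1.trans_le h)]

theorem exists_length_keplerConcat_le (n : ℕ) :
    ∃ N, (keplerConcat N).length ≤ n ∧ n < (keplerConcat (N + 1)).length := by
  have hex : ∃ N, n < (keplerConcat N).length := ⟨n + 1, le_length_keplerConcat (n + 1)⟩
  have hspec := Nat.find_spec hex
  have hmin := @Nat.find_min _ _ hex
  rcases hN : Nat.find hex with _ | N
  · rw [hN] at hspec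
    simp [keplerConcat] at hspec
  · rw [hN] at hspec hmin
    exact ⟨N, not_lt.1 (hmin (Nat.lt_succ_self N)), hspec⟩

theorem abs_blockExcess_keplerConcat_sub_le (d : List ℕ) (c : ℝ) (N : ℕ) :
    |blockExcess d c (keplerConcat N) - ∑ n ∈ Finset.range N, blockExcess d c (keplerExp (n + 1))|
      ≤ d.length * N := by
  induction N with
  | zero => simp [keplerConcat, blockExcess, blockCount]
  | succ N ih =>
    have h := abs_le.1 (abs_blockExcess_append_sub_le d c (keplerConcat N) (keplerExp (N + 1)))
    have ih := abs_le.1 ih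
    rw [keplerConcat_succ, Finset.sum_range_succ, abs_le]
    push_cast
    constructor <;> linarith

theorem exists_abs_blockExcess_keplerConcat_le (d : List ℕ) (hd : ∀ x ∈ d, 0 < x) :
    ∃ K : ℝ, ∀ N : ℕ,
      |blockExcess d ((2 : ℝ) ^ d.sum)⁻¹ (keplerConcat N)| ≤ K * (N + 1) := by
  obtain ⟨K, hK⟩ := exists_abs_sum_tailExcess_le d hd
  set c : ℝ := ((2 : ℝ) ^ d.sum)⁻¹ with hc
  refine ⟨d.length + K + 2, fun N => ?_⟩
  have h1 := abs_le.1 (abs_blockExcess_keplerConcat_sub_le d c N)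
  have h2 := abs_le.1 (hK (N + 1))
  have h3 : ∑ n ∈ Finset.range N, blockExcess d c (keplerExp (n + 1))
      = ∑ n ∈ Finset.range (N + 1), tailExcess d c n
        + ∑ n ∈ Finset.range (N + 1), prefixInd d n - blockExcess d c (keplerExp 0) := by
    rw [← Finset.sum_add_distrib, Finset.sum_range_succ']
    simp [blockExcess_keplerExp]
  have h4 : 0 ≤ ∑ n ∈ Finset.range (N + 1), prefixInd d n :=
    Finset.sum_nonneg fun n _ => (prefixInd_mem d n).1
  have h5 : ∑ n ∈ Finset.range (N + 1), prefixInd d n ≤ N + 1 := by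
    simpa using Finset.sum_le_card_nsmul (Finset.range (N + 1)) _ 1
      fun n _ => (prefixInd_mem d n).2
  have h6 := abs_blockExcess_le (by positivity) (inv_two_pow_le_one d.sum) d (keplerExp 0)
  rw [← hc, keplerExp_of_le_one zero_le_one, List.length_singleton, Nat.cast_one] at h6
  rw [keplerExp_of_le_one zero_le_one] at h3
  have h6 := abs_le.1 h6
  have hN : (0 : ℝ) ≤ N := by positivity
  have hl : (0 : ℝ) ≤ d.length := by positivity
  push_cast at h2
  rw [h3] at h1
  rw [abs_le]
  constructor <;> nlinarith

/-- The discrepancy of the first `n` digits is linear in the number of rationals used. -/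
theorem exists_abs_occCount_sub_le {d : List ℕ} (hd0 : d ≠ []) (hd : ∀ x ∈ d, 0 < x) :
    ∃ K : ℝ, ∀ n : ℕ, ∃ N : ℕ, (keplerConcat N).length ≤ n ∧
      |(occCount keplerDigits d n : ℝ) - ((2 : ℝ) ^ d.sum)⁻¹ * n| ≤ K * (N + 1) := by
  obtain ⟨K, hK⟩ := exists_abs_blockExcess_keplerConcat_le d hd
  set c : ℝ := ((2 : ℝ) ^ d.sum)⁻¹ with hc
  refine ⟨K + 2 + d.length, fun n => ?_⟩
  obtain ⟨N, hN, hN'⟩ := exists_length_keplerConcat_le n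
  refine ⟨N, hN, ?_⟩
  have hocc : (occCount keplerDigits d n : ℝ) - c * n
      = blockExcess d c ((List.range n).map keplerDigits) := by
    rw [occCount_eq_blockCount _ hd0, blockExcess]
    simp
  set r := (keplerExp (N + 1)).take (n - (keplerConcat N).length) with hr
  rw [hocc, map_range_keplerDigits hN'.le, keplerConcat_succ, List.take_append,
    List.take_of_length_le hN, ← hr]
  have hrlen : (r.length : ℝ) ≤ N + 2 := by
    have h1 := length_keplerExp_le (N + 1)
    have h2 := Nat.log_le_self 2 (N + 1)
    have h3 : r.length ≤ (keplerExp (N + 1)).length := by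
      rw [hr, List.length_take]
      exact min_le_right _ _
    exact_mod_cast (by omega : r.length ≤ N + 2)
  have h1 := abs_le.1 (abs_blockExcess_append_sub_le d c (keplerConcat N) r)
  have h2 := abs_le.1 (hK N)
  have h3 := abs_le.1 (abs_blockExcess_le (by positivity) (inv_two_pow_le_one d.sum) d r)
  rw [← hc] at h3
  have hN0 : (0 : ℝ) ≤ N := by positivity
  have hl : (0 : ℝ) ≤ d.length := by positivity
  rw [abs_le]
  constructor <;> nlinarith

/-- **The Kepler concatenation `𝒦 = [2, 3, 1, 2, 4, 1, 3, 2, 2, 1, 1, 2, 5, …] ≈ 0.44031`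
is Minkowski normal**: for every `k ≥ 1` and every block `d = (d₁, …, d_k)` of positive
integers, the number of positions `1 ≤ i ≤ n - k + 1` at which `d` occurs among the first
`n` digits of `𝒦`, divided by `n`, converges to `2^{-(d₁ + ⋯ + d_k)}` as `n → ∞`. -/
theorem keplerDigits_minkowskiNormal : MinkowskiNormalSeq keplerDigits := by
  intro d hd0 hd
  obtain ⟨K, hK⟩ := exists_abs_occCount_sub_le hd0 hd
  have hK0 : 0 ≤ K := by
    obtain ⟨N, -, h⟩ := hK 0
    have := (abs_nonneg _).trans h
    exact nonneg_of_mul_nonneg_left this (by positivity)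
  rw [Metric.tendsto_atTop]
  intro ε hε
  obtain ⟨R, hR⟩ := exists_nat_gt (4 * (K + 1) / ε)
  obtain ⟨C, hC⟩ := exists_mul_sub_le_sum_length R
  obtain ⟨n₀, hn₀⟩ := exists_nat_gt (max 1 (C + 1))
  refine ⟨n₀, fun n hn => ?_⟩
  have hn' : max 1 (C + 1) < n := hn₀.trans_le (by exact_mod_cast hn)
  have hn1 : (1 : ℝ) < n := (le_max_left _ _).trans_lt hn'
  have hnC : C + 1 < n := (le_max_right _ _).trans_lt hn'
  have hn0 : (0 : ℝ) < n := one_pos.trans hn1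
  obtain ⟨N, hN, h⟩ := hK n
  have hlen : ((keplerConcat N).length : ℝ) ≤ n := by exact_mod_cast hN
  have hW := hC (N + 1)
  rw [length_keplerConcat] at hlen
  push_cast at hW
  rw [div_lt_iff₀ hε] at hR
  rw [Real.dist_eq, show (occCount keplerDigits d n : ℝ) / n - ((2 : ℝ) ^ d.sum)⁻¹
    = (occCount keplerDigits d n - ((2 : ℝ) ^ d.sum)⁻¹ * n) / n by field_simp,
    abs_div, abs_of_pos hn0, div_lt_iff₀ hn0]
  refine h.trans_lt ?_
  have hNpos : (0 : ℝ) < N + 1 := by positivity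
  have h1 : (R : ℝ) * (N + 1) < 4 * n := by linarith
  have h2 : 4 * (K + 1) * (N + 1) < R * ε * (N + 1) := mul_lt_mul_of_pos_right hR hNpos
  have h3 : R * (N + 1) * ε < 4 * n * ε := mul_lt_mul_of_pos_right h1 hε
  linarith
end
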